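/- Let d ≥ 2, let X be a real Banach space, f ∈ C_c^∞(ℝ^d, X) and λ > 0, and set f_λ(x) := f(λx). Then for every ξ ∈ ℝ^d, (Φ ∗ f_λ)(ξ) = λ^{−2} (Φ ∗ f)(λξ) + λ^{−d} c_d(λ) ∫_{ℝ^d} f(ω) dω, where c_d(λ) = 0 if d > 2 and c₂(λ) = −(log λ)/(2π). Consequently, for all j, k ∈ {1,…,d}, D_jD_k(Φ ∗ f_λ)(ξ) = (D_jD_k(Φ ∗ f))(λξ) for every ξ ∈ ℝ^d. -/

import Mathlib

open MeasureTheory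

/-- The `i`-th standard basis vector of `ℝ^d`. -/
noncomputable def stdBasis {d : ℕ} (i : Fin d) : EuclideanSpace ℝ (Fin d) :=
  EuclideanSpace.single i (1 : ℝ)

/-- The second-order partial derivative `DⱼDₖ u` of a function `u : ℝ^d → X`. -/
noncomputable def secondPartial {d : ℕ} {X : Type*} [NormedAddCommGroup X]
    [NormedSpace ℝ X] (j k : Fin d) (u : EuclideanSpace ℝ (Fin d) → X)
    (x : EuclideanSpace ℝ (Fin d)) : X :=
  fderiv ℝ (fun y => fderiv ℝ u y (stdBasis k)) x (stdBasis j)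

/-- The fundamental solution of the Laplace equation on `ℝ^d`. -/
noncomputable def fundSol (d : ℕ) (ξ : EuclideanSpace ℝ (Fin d)) : ℝ :=
  if d = 2 then (2 * Real.pi)⁻¹ * Real.log ‖ξ‖
  else ((d : ℝ) * ((2 : ℝ) - d) *
      (volume (Metric.ball (0 : EuclideanSpace ℝ (Fin d)) 1)).toReal)⁻¹ *
    ‖ξ‖ ^ ((2 : ℝ) - d)

theorem aux_log_locInt :
    LocallyIntegrable (fun x : EuclideanSpace ℝ (Fin 2) => Real.log ‖x‖) := by
  intro x
  refine ⟨Metric.ball 0 (‖x‖ + 1), Metric.isOpen_ball.mem_nhds (by simp), ?_⟩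
  rw [integrableOn_fun_norm_addHaar (volume : Measure (EuclideanSpace ℝ (Fin 2)))]
  have h : Continuous (fun y : ℝ => y ^ (Module.finrank ℝ (EuclideanSpace ℝ (Fin 2)) - 1)
      • Real.log y) := by
    simpa using Real.continuous_mul_log
  exact (h.integrableOn_Icc (a := 0) (b := ‖x‖ + 1)).mono_set Set.Ioo_subset_Icc_self

theorem aux_integrable {X : Type*} [NormedAddCommGroup X] [NormedSpace ℝ X]
    (f : EuclideanSpace ℝ (Fin 2) → X) (hf : Continuous f)
    (hsupp : HasCompactSupport f) (z : EuclideanSpace ℝ (Fin 2)) :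
    Integrable (fun η => Real.log ‖z - η‖ • f η) := by
  have hs : HasCompactSupport (fun η => f (z - η)) :=
    hsupp.comp_homeomorph (Homeomorph.subLeft z)
  have h := aux_log_locInt.integrable_smul_right_of_hasCompactSupport
    (g := fun η => f (z - η)) (by fun_prop) hs
  simpa using h.comp_sub_left z

theorem aux_fundSol_smul {d : ℕ} (hd : d ≠ 2) {lam : ℝ} (hlam : 0 < lam)
    (z : EuclideanSpace ℝ (Fin d)) :
    (lam ^ d)⁻¹ * fundSol d (lam⁻¹ • z) = (lam ^ 2)⁻¹ * fundSol d z := by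
  have h : (lam⁻¹) ^ ((2 : ℝ) - d) = lam ^ d * (lam ^ 2)⁻¹ := by
    rw [Real.inv_rpow hlam.le, Real.rpow_sub hlam, Real.rpow_natCast, Real.rpow_ofNat]
    field_simp
  simp only [fundSol, if_neg hd, norm_smul, norm_inv, Real.norm_eq_abs, abs_of_pos hlam]
  rw [Real.mul_rpow (by positivity) (by positivity), h]
  field_simp

theorem aux_scaling {d : ℕ}
    {X : Type*} [NormedAddCommGroup X] [NormedSpace ℝ X]
    (f : EuclideanSpace ℝ (Fin d) → X) (hf : Continuous f)
    (hsupp : HasCompactSupport f) (lam : ℝ) (hlam : 0 < lam)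
    (ξ : EuclideanSpace ℝ (Fin d)) :
      (∫ η, fundSol d (ξ - η) • f (lam • η)) =
        (lam ^ 2)⁻¹ • (∫ η, fundSol d (lam • ξ - η) • f η) +
        ((lam ^ d)⁻¹ * (if d = 2 then -(Real.log lam) / (2 * Real.pi) else 0)) •
          ∫ ω, f ω := by
  have key : (∫ η, fundSol d (ξ - η) • f (lam • η)) =
      (lam ^ d)⁻¹ • ∫ η, fundSol d (lam⁻¹ • (lam • ξ - η)) • f η := by
    have := Measure.integral_comp_smul (volume : Measure (EuclideanSpace ℝ (Fin d)))
      (fun η => fundSol d (lam⁻¹ • (lam • ξ - η)) • f η) lam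
    rw [finrank_euclideanSpace_fin, abs_of_pos (by positivity)] at this
    rw [← this]
    simp only [← smul_sub, inv_smul_smul₀ hlam.ne']
  rw [key]
  by_cases hd : d = 2
  · subst hd
    have hae : (fun η => fundSol 2 (lam⁻¹ • (lam • ξ - η)) • f η) =ᵐ[volume]
        fun η => fundSol 2 (lam • ξ - η) • f η +
          (-(Real.log lam) / (2 * Real.pi)) • f η := by
      filter_upwards [Measure.ae_ne volume (lam • ξ)] with η hη
      have h0 : ‖lam • ξ - η‖ ≠ 0 := norm_ne_zero_iff.2 (sub_ne_zero.2 hη.symm)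
      rw [← add_smul]
      congr 1
      simp only [fundSol, if_true]
      rw [norm_smul, Real.log_mul (by simpa using hlam.ne') h0, norm_inv, Real.log_inv,
        Real.norm_eq_abs, abs_of_pos hlam]
      ring
    have hi : Integrable (fun η => fundSol 2 (lam • ξ - η) • f η) := by
      simpa only [fundSol, if_true, mul_smul, Pi.smul_def] using
        (aux_integrable f hf hsupp (lam • ξ)).smul ((2 * Real.pi)⁻¹)
    have hi2 : Integrable (fun η => (-(Real.log lam) / (2 * Real.pi)) • f η) :=
      (hf.integrable_of_hasCompactSupport (μ := volume) hsupp).smul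
      (-(Real.log lam) / (2 * Real.pi))
    rw [integral_congr_ae hae, integral_add hi hi2, integral_smul, smul_add, smul_smul,
      if_pos rfl]
  · rw [if_neg hd, mul_zero, zero_smul, add_zero, ← integral_smul, ← integral_smul]
    simp only [smul_smul, aux_fundSol_smul hd hlam]

/-- Scaling behaviour of the Newtonian potential: for
`f ∈ C_c^∞(ℝ^d, X)`, `λ > 0` and `f_λ(x) = f(λx)` one has
`(Φ ∗ f_λ)(ξ) = λ⁻²(Φ ∗ f)(λξ) + λ^{-d} c_d(λ) ∫ f`, where `c_d(λ) = 0` for `d > 2`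
and `c₂(λ) = -(log λ)/(2π)`; consequently `DⱼDₖ(Φ ∗ f_λ)(ξ) = (DⱼDₖ(Φ ∗ f))(λξ)`. -/
theorem newtonian_potential_scaling {d : ℕ} (hd : 2 ≤ d)
    {X : Type*} [NormedAddCommGroup X] [NormedSpace ℝ X] [CompleteSpace X]
    (f : EuclideanSpace ℝ (Fin d) → X) (hf : ContDiff ℝ (⊤ : ℕ∞) f)
    (hsupp : HasCompactSupport f) (lam : ℝ) (hlam : 0 < lam) :
    (∀ ξ : EuclideanSpace ℝ (Fin d),
      (∫ η, fundSol d (ξ - η) • f (lam • η)) =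
        (lam ^ 2)⁻¹ • (∫ η, fundSol d (lam • ξ - η) • f η) +
        ((lam ^ d)⁻¹ * (if d = 2 then -(Real.log lam) / (2 * Real.pi) else 0)) •
          ∫ ω, f ω) ∧
    ∀ j k : Fin d, ∀ ξ : EuclideanSpace ℝ (Fin d),
      secondPartial j k (fun ζ => ∫ η, fundSol d (ζ - η) • f (lam • η)) ξ =
        secondPartial j k (fun ζ => ∫ η, fundSol d (ζ - η) • f η) (lam • ξ) := by
  have h1 := aux_scaling f hf.continuous hsupp lam hlam
  refine ⟨h1, fun j k ξ => ?_⟩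
  rw [funext h1]
  set u : EuclideanSpace ℝ (Fin d) → X := fun ζ => ∫ η, fundSol d (ζ - η) • f η with hu
  generalize ((lam ^ d)⁻¹ * (if d = 2 then -(Real.log lam) / (2 * Real.pi) else 0)) •
          (∫ ω, f ω) = c
  change secondPartial j k (fun ζ => (lam ^ 2)⁻¹ • u (lam • ζ) + c) ξ = _
  have e1 : ∀ (a : ℝ) (v : EuclideanSpace ℝ (Fin d) → X) (x y : EuclideanSpace ℝ (Fin d)),
      fderiv ℝ (fun ζ => a • v (lam • ζ)) x y = (a * lam) • fderiv ℝ v (lam • x) y := by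
    intro a v x y
    have := congrFun (fderiv_const_smul_field (𝕜 := ℝ) (f := fun ζ => v (lam • ζ)) a) x
    rw [Pi.smul_apply, fderiv_comp_smul] at this
    change fderiv ℝ (a • fun ζ => v (lam • ζ)) x y = _
    rw [this]
    simp [smul_smul]
  unfold secondPartial
  simp only [fderiv_add_const, e1]
  rw [e1 _ (fun y => fderiv ℝ u y (stdBasis k))]
  rw [show (lam ^ 2)⁻¹ * lam * lam = 1 by field_simp, one_smul]
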